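/- arXiv:2403.19342 — 3 statements merged into one kernel-verified Lean document; each statement's English description precedes it below -/
import Mathlib

section
/- Let A be an n×n real symmetric positive definite matrix and M an n×n real matrix such that M + Mᵀ − A is positive definite, and set M̃ := Mᵀ (M + Mᵀ − A)⁻¹ M. Then A ≼ M̃, i.e., M̃ − A is positive semidefinite. -/
/-!
With `S = M + Mᵀ - A`, symmetric and positive definite, completing the square gives
`Mᵀ S⁻¹ M - A = (M - S)ᵀ S⁻¹ (M - S)`. The right-hand side is a congruence of the positive
definite matrix `S⁻¹`, hence positive semidefinite.
-/

open Matrix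

/-- With `M̃ := Mᵀ (M + Mᵀ - A)⁻¹ M`, one has `A ≼ M̃` in the Loewner order,
i.e. `M̃ - A` is positive semidefinite. -/
theorem stmt_2 {n : ℕ} (hn : 1 ≤ n)
    (A M : Matrix (Fin n) (Fin n) ℝ)
    (hA : A.PosDef)
    (hM : (M + Mᵀ - A).PosDef) :
    (Mᵀ * (M + Mᵀ - A)⁻¹ * M - A).PosSemidef := by
  obtain ⟨S, hS⟩ : ∃ S, S = M + Mᵀ - A := ⟨_, rfl⟩
  rw [← hS] at hM ⊢
  have hdet : IsUnit S.det := (Matrix.isUnit_iff_isUnit_det S).1 hM.isUnit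
  have hSt : Sᵀ = S := by simpa [conjTranspose_eq_transpose_of_trivial] using hM.isHermitian.eq
  -- Expanding the right-hand side, the terms other than `Mᵀ S⁻¹ M` sum to `-Mᵀ - M + S = -A`.
  have key : Mᵀ * S⁻¹ * M - A = (M - S)ᴴ * S⁻¹ * (M - S) := by
    have hAS : A = M + Mᵀ - S := by rw [hS]; abel
    rw [conjTranspose_eq_transpose_of_trivial, transpose_sub, hSt, sub_mul, sub_mul,
      mul_nonsing_inv S hdet, mul_sub, one_mul, mul_assoc Mᵀ S⁻¹ S, nonsing_inv_mul S hdet,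
      mul_one, hAS]
    abel
  rw [key]
  exact hM.inv.posSemidef.conjTranspose_mul_mul_same (M - S)
end

section
/- The exact two-grid preconditioner P_TG⁻¹ := M⁻ᵀ + M⁻¹ − M⁻ᵀ A M⁻¹ + (I − M⁻ᵀ A) R_cᵀ A_c⁻¹ R_c (I − A M⁻¹) is a symmetric positive definite matrix. -/
open Matrix

/-- The exact two-grid preconditioner
`P_TG⁻¹ = M⁻ᵀ + M⁻¹ - M⁻ᵀ A M⁻¹ + (I - M⁻ᵀ A) R_cᵀ A_c⁻¹ R_c (I - A M⁻¹)`. -/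
noncomputable def PTGinv {n nc : ℕ}
    (A M : Matrix (Fin n) (Fin n) ℝ) (Rc : Matrix (Fin nc) (Fin n) ℝ) :
    Matrix (Fin n) (Fin n) ℝ :=
  (Mᵀ)⁻¹ + M⁻¹ - (Mᵀ)⁻¹ * A * M⁻¹
    + (1 - (Mᵀ)⁻¹ * A) * Rcᵀ * (Rc * A * Rcᵀ)⁻¹ * Rc * (1 - A * M⁻¹)

/-!
Put `N = M⁻¹`. Since `(Mᵀ)⁻¹ = Nᵀ`, the smoother part of the preconditioner factors as
`Nᵀ + N - Nᵀ A N = Nᵀ (M + Mᵀ - A) N`, a congruence of a positive definite matrix by an invertible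
one, and the coarse correction is `Cᵀ (Rc A Rcᵀ)⁻¹ C` with `C = Rc (1 - A N)`, which is positive
semidefinite. The sum of the two is positive definite. Invertibility of `M` holds because its
symmetric part `M + Mᵀ = (M + Mᵀ - A) + A` is positive definite.
-/

/-- A real square matrix with positive definite symmetric part is invertible: if `M v = 0`, then
`vᵀ (M + Mᵀ) v = 2 vᵀ M v = 0`. -/
lemma isUnit_of_posDef_add_transpose {n : ℕ} {M : Matrix (Fin n) (Fin n) ℝ}
    (h : (M + Mᵀ).PosDef) : IsUnit M := by
  rw [← Matrix.mulVec_injective_iff_isUnit]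
  refine (injective_iff_map_eq_zero M.mulVecLin).2 fun v hv => ?_
  rw [Matrix.mulVecLin_apply] at hv
  by_contra hne
  have hpos := h.dotProduct_mulVec_pos hne
  rw [Matrix.add_mulVec, dotProduct_add, hv, Matrix.mulVec_transpose, star_trivial,
    dotProduct_comm v (v ᵥ* M), ← Matrix.dotProduct_mulVec, hv] at hpos
  simp at hpos

/-- The exact two-grid preconditioner `P_TG⁻¹` is symmetric positive definite. -/
theorem stmt_3 {n nc : ℕ} (hn : 1 ≤ n) (hnc : 1 ≤ nc)
    (A M : Matrix (Fin n) (Fin n) ℝ) (Rc : Matrix (Fin nc) (Fin n) ℝ)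
    (hA : A.PosDef)
    (hM : (M + Mᵀ - A).PosDef)
    (hAc : (Rc * A * Rcᵀ).PosDef) :
    (PTGinv A M Rc).PosDef := by
  have hMu : IsUnit M := isUnit_of_posDef_add_transpose (by simpa using hM.add hA)
  have hdet : IsUnit M.det := (Matrix.isUnit_iff_isUnit_det M).1 hMu
  have hAt : Aᵀ = A := by simpa using hA.isHermitian.eq
  have hMN : M * M⁻¹ = 1 := Matrix.mul_nonsing_inv M hdet
  have hNM : (M⁻¹)ᵀ * Mᵀ = 1 := by rw [← Matrix.transpose_mul, hMN, Matrix.transpose_one]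
  have hinj : Function.Injective (M⁻¹).mulVec :=
    Matrix.mulVec_injective_iff_isUnit.2 (Matrix.isUnit_nonsing_inv_iff.2 hMu)
  have hsmooth := hM.conjTranspose_mul_mul_same hinj
  have hcoarse := hAc.inv.posSemidef.conjTranspose_mul_mul_same (Rc * (1 - A * M⁻¹))
  convert hsmooth.add_posSemidef hcoarse using 1
  simp only [PTGinv, Matrix.conjTranspose_eq_transpose_of_trivial, ← Matrix.transpose_nonsing_inv]
  congr 1
  · rw [Matrix.mul_sub, Matrix.mul_add, hNM, Matrix.sub_mul, Matrix.add_mul, Matrix.one_mul,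
      Matrix.mul_assoc _ M, hMN, Matrix.mul_one]
  · simp only [Matrix.transpose_mul, Matrix.transpose_sub, Matrix.transpose_one, hAt,
      Matrix.mul_assoc]
end

section
/- The global TPFA stiffness form is controlled by the weighted L² form with weight the trace of the normalized permeability: for every grid function q : Fin N × Fin N → ℝ, a(q, q) ≤ 8 Σ_{i,j} (κ̃ˣ_{i,j} + κ̃ʸ_{i,j}) q_{i,j}². (This realizes, with explicit constant C_s = 8, the bound A ≼ C_s Σ_i E_iᵀ S_i E_i used in the condition number analysis.) -/
/-!
By the Cauchy–Schwarz inequality, `(y - x)² ≤ (1/a + 1/b) (a x² + b y²)` for `a, b > 0`, so an edge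
whose weight is the harmonic average of `a` and `b` contributes at most `2 (a x² + b y²)`. In each
coordinate direction a cell belongs to at most two edges, so summation along grid lines bounds
the form by `4 Σ (κ̃ˣ + κ̃ʸ) q²`, which is at most the claimed bound.
-/

/-- Horizontal edge weight `κ̃_{i+1/2,j}`: harmonic average of `κ̃ˣ` on the two adjacent
cells, zero for edges outside the `N×N` grid. -/
noncomputable def wH (N : ℕ) (kx : ℕ → ℕ → ℝ) (i j : ℕ) : ℝ :=
  if i + 2 ≤ N ∧ j + 1 ≤ N then 2 / (1 / kx i j + 1 / kx (i + 1) j) else 0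

/-- Vertical edge weight `κ̃_{i,j+1/2}`: harmonic average of `κ̃ʸ` on the two adjacent
cells, zero for edges outside the `N×N` grid. -/
noncomputable def wV (N : ℕ) (ky : ℕ → ℕ → ℝ) (i j : ℕ) : ℝ :=
  if i + 1 ≤ N ∧ j + 2 ≤ N then 2 / (1 / ky i j + 1 / ky i (j + 1)) else 0

/-- The TPFA stiffness form `a(q,q)` on an `N×N` grid. -/
noncomputable def tpfa (N : ℕ) (kx ky : ℕ → ℕ → ℝ) (q : ℕ → ℕ → ℝ) : ℝ :=
  (∑ i ∈ Finset.range (N - 1), ∑ j ∈ Finset.range N,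
      wH N kx i j * (q (i + 1) j - q i j) ^ 2)
    + ∑ i ∈ Finset.range N, ∑ j ∈ Finset.range (N - 1),
      wV N ky i j * (q i (j + 1) - q i j) ^ 2

lemma harmonic_mul_sq_sub_le {a b : ℝ} (ha : 0 < a) (hb : 0 < b) (x y : ℝ) :
    2 / (1 / a + 1 / b) * (y - x) ^ 2 ≤ 2 * (a * x ^ 2 + b * y ^ 2) := by
  have e : 2 / (1 / a + 1 / b) = 2 * a * b / (a + b) := by
    field_simp
    ring
  rw [e, div_mul_eq_mul_div, div_le_iff₀ (by positivity)]
  -- The difference of the two sides is `2 (a x + b y)²`.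
  nlinarith [sq_nonneg (a * x + b * y)]

/-- The bound along a single grid line with cell permeabilities `k` and edge weights `w`. -/
lemma line_sum_le (N : ℕ) (k w q : ℕ → ℝ) (hk : ∀ i < N, 0 < k i)
    (hw : ∀ i, i + 1 < N → w i = 2 / (1 / k i + 1 / k (i + 1))) :
    ∑ i ∈ Finset.range (N - 1), w i * (q (i + 1) - q i) ^ 2
      ≤ 4 * ∑ i ∈ Finset.range N, k i * q i ^ 2 := by
  rcases N with _ | n
  · simp
  have h : ∑ i ∈ Finset.range n, w i * (q (i + 1) - q i) ^ 2
      ≤ ∑ i ∈ Finset.range n, 2 * (k i * q i ^ 2 + k (i + 1) * q (i + 1) ^ 2) := by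
    refine Finset.sum_le_sum fun i hi => ?_
    have hi := Finset.mem_range.1 hi
    rw [hw i (by omega)]
    exact harmonic_mul_sq_sub_le (hk i (by omega)) (hk (i + 1) (by omega)) _ _
  rw [← Finset.mul_sum, Finset.sum_add_distrib] at h
  have h1 := Finset.sum_range_succ (fun i => k i * q i ^ 2) n
  have h2 := Finset.sum_range_succ' (fun i => k i * q i ^ 2) n
  have p1 := mul_nonneg (hk n (by omega)).le (sq_nonneg (q n))
  have p2 := mul_nonneg (hk 0 (by omega)).le (sq_nonneg (q 0))
  simp only [Nat.add_sub_cancel]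
  linarith

/-- The global TPFA stiffness form is controlled by the weighted `L²` form with weight
the trace of the normalized permeability:
`a(q,q) ≤ 8 Σ_{i,j} (κ̃ˣ_{i,j} + κ̃ʸ_{i,j}) q_{i,j}²` (constant `C_s = 8`). -/
theorem stmt_14 (N : ℕ) (hN : 1 ≤ N) (kx ky : ℕ → ℕ → ℝ)
    (hpos : ∀ i j, i < N → j < N → 0 < kx i j ∧ 0 < ky i j)
    (q : ℕ → ℕ → ℝ) :
    tpfa N kx ky q ≤
      8 * ∑ i ∈ Finset.range N, ∑ j ∈ Finset.range N,
        (kx i j + ky i j) * q i j ^ 2 := by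
  have hx : ∑ i ∈ Finset.range (N - 1), ∑ j ∈ Finset.range N,
      wH N kx i j * (q (i + 1) j - q i j) ^ 2
      ≤ 4 * ∑ i ∈ Finset.range N, ∑ j ∈ Finset.range N, kx i j * q i j ^ 2 := by
    rw [Finset.sum_comm]
    conv_rhs => rw [Finset.sum_comm]
    rw [Finset.mul_sum]
    refine Finset.sum_le_sum fun j hj => ?_
    have hj := Finset.mem_range.1 hj
    exact line_sum_le N (fun i => kx i j) (fun i => wH N kx i j) (fun i => q i j)
      (fun i hi => (hpos i j hi hj).1) fun i hi => if_pos ⟨by omega, by omega⟩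
  have hy : ∑ i ∈ Finset.range N, ∑ j ∈ Finset.range (N - 1),
      wV N ky i j * (q i (j + 1) - q i j) ^ 2
      ≤ 4 * ∑ i ∈ Finset.range N, ∑ j ∈ Finset.range N, ky i j * q i j ^ 2 := by
    rw [Finset.mul_sum]
    refine Finset.sum_le_sum fun i hi => ?_
    have hi := Finset.mem_range.1 hi
    exact line_sum_le N (ky i) (wV N ky i) (q i)
      (fun j hj => (hpos i j hi hj).2) fun j hj => if_pos ⟨by omega, by omega⟩
  have hnn : 0 ≤ ∑ i ∈ Finset.range N, ∑ j ∈ Finset.range N, (kx i j + ky i j) * q i j ^ 2 := by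
    refine Finset.sum_nonneg fun i hi => Finset.sum_nonneg fun j hj => ?_
    obtain ⟨h1, h2⟩ := hpos i j (Finset.mem_range.1 hi) (Finset.mem_range.1 hj)
    positivity
  have hs : ∑ i ∈ Finset.range N, ∑ j ∈ Finset.range N, (kx i j + ky i j) * q i j ^ 2
      = ∑ i ∈ Finset.range N, ∑ j ∈ Finset.range N, kx i j * q i j ^ 2
        + ∑ i ∈ Finset.range N, ∑ j ∈ Finset.range N, ky i j * q i j ^ 2 := by
    simp only [add_mul, Finset.sum_add_distrib]
  unfold tpfa
  linarith
end
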